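/- The one-step rewrite relation → of the name algebra is terminating: there is no infinite sequence of terms t₀ → t₁ → t₂ → ⋯ ; equivalently, the converse of the relation → is a well-founded relation on Term. -/

import Mathlib

/-- Terms of the name algebra over atoms in ℕ. -/
inductive Term : Type
  | var : ℕ → Term
  | projL : Term → Term
  | projR : Term → Term
  | join : Term → Term → Term
deriving DecidableEq

/-- One-step rewrite relation: the three rules `(u ∧ v).l → u`, `(u ∧ v).r → v`,
`(u.l ∧ u.r) → u`, closed under all term contexts. -/
inductive Step : Term → Term → Prop
  | splitL (u v : Term) : Step (Term.projL (Term.join u v)) u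
  | splitR (u v : Term) : Step (Term.projR (Term.join u v)) v
  | merge (u : Term) : Step (Term.join (Term.projL u) (Term.projR u)) u
  | congL {a b : Term} : Step a b → Step (Term.projL a) (Term.projL b)
  | congR {a b : Term} : Step a b → Step (Term.projR a) (Term.projR b)
  | congJoinL {a b : Term} (v : Term) : Step a b → Step (Term.join a v) (Term.join b v)
  | congJoinR {a b : Term} (u : Term) : Step a b → Step (Term.join u a) (Term.join u b)

/-- Reflexive-transitive closure of `Step`. -/
def Steps : Term → Term → Prop := Relation.ReflTransGen Step

/-- A term is in normal form if no rewrite step applies to it. -/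
def NormalForm (n : Term) : Prop := ¬ ∃ m, Step n m

/-- `u ≈ v` : the normal forms of `u` and `v` coincide, i.e. they reach a common normal form. -/
def TermEquiv (u v : Term) : Prop := ∃ n, NormalForm n ∧ Steps u n ∧ Steps v n

/-- The number of constructors in a term, atoms included: the termination measure for `Step`. -/
def Term.size : Term → ℕ
  | .var _ => 1
  | .projL t => t.size + 1
  | .projR t => t.size + 1
  | .join u v => u.size + v.size + 1

theorem Step.size_lt {a b : Term} (h : Step a b) : b.size < a.size := by
  induction h <;> simp only [Term.size] <;> lia

theorem Step.wellFounded_converse : WellFounded (fun b a => Step a b) :=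
  Subrelation.wf Step.size_lt (measure Term.size).wf

/-- The rewrite relation of the name algebra is terminating: the converse of `Step`
is well-founded, equivalently there is no infinite rewrite sequence. -/
theorem step_terminating :
    WellFounded (fun b a => Step a b) ∧
    ∀ f : ℕ → Term, ¬ (∀ n : ℕ, Step (f n) (f (n + 1))) := by
  refine ⟨Step.wellFounded_converse, fun f hf => ?_⟩
  have no_descending_chain :=
    wellFounded_iff_isEmpty_descending_chain.mp Step.wellFounded_converse
  exact no_descending_chain.false ⟨f, hf⟩
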